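/- arXiv:1706.05736 — 2 statements merged into one kernel-verified Lean document; each statement's English description precedes it below -/
import Mathlib

section
/- Let A be an n×n real positive-semidefinite matrix, let 1 ≤ r ≤ k ≤ n, and let Ω be an n×k random matrix with independent standard normal entries. Define the rank-k Nyström approximation Â = AΩ((Ω*AΩ)†)Ω*A. Then E‖A − Â‖₁ ≤ min over natural numbers ϱ with ϱ < k − 1 of [(1 + ϱ/(k − ϱ − 1)) · σ_{ϱ+1}^{(1)}(A)], where σ_{ϱ+1}^{(1)}(A) = Σ_{i > ϱ} σ_i(A) is the optimal rank-ϱ Schatten 1-norm approximation error. -/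
open Matrix MeasureTheory ProbabilityTheory
open scoped ENNReal NNReal ComplexOrder Classical

namespace PsdSketch

variable {𝕜 : Type*} [RCLike 𝕜]

/-- The four Penrose conditions characterizing the Moore–Penrose pseudoinverse. -/
def IsMoorePenrose {m k : ℕ} (M : Matrix (Fin m) (Fin k) 𝕜)
    (X : Matrix (Fin k) (Fin m) 𝕜) : Prop :=
  M * X * M = M ∧ X * M * X = X ∧ (M * X)ᴴ = M * X ∧ (X * M)ᴴ = X * M

/-- The Moore–Penrose pseudoinverse `M†` (the unique matrix satisfying the
Penrose conditions). -/
noncomputable def pinv {m k : ℕ} (M : Matrix (Fin m) (Fin k) 𝕜) :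
    Matrix (Fin k) (Fin m) 𝕜 :=
  if h : ∃ X, IsMoorePenrose M X then h.choose else 0

/-- The Nyström approximation `Â = A Ω ((Ω* A Ω)†) Ω* A`. -/
noncomputable def nystrom {n k : ℕ} (A : Matrix (Fin n) (Fin n) 𝕜)
    (Ω : Matrix (Fin n) (Fin k) 𝕜) : Matrix (Fin n) (Fin n) 𝕜 :=
  A * Ω * pinv (Ωᴴ * A * Ω) * Ωᴴ * A

/-- The `i`-th singular value of a square matrix, 0-indexed and listed in weakly
decreasing order (so `sval M 0 = σ₁(M)`), with `sval M i = 0` for `i ≥ n`. -/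
noncomputable def sval {n : ℕ} (M : Matrix (Fin n) (Fin n) 𝕜) (i : ℕ) : ℝ :=
  if h : i < n then
    Real.sqrt
      ((Matrix.posSemidef_conjTranspose_mul_self M).1.eigenvalues
        (Tuple.sort (Matrix.posSemidef_conjTranspose_mul_self M).1.eigenvalues
          (Fin.rev ⟨i, h⟩)))
  else 0

/-- The Schatten `p`-norm: the `ℓ_p` norm of the vector of singular values. -/
noncomputable def schatten {n : ℕ} (p : ℝ≥0∞) (M : Matrix (Fin n) (Fin n) 𝕜) : ℝ :=
  if p = ∞ then sval M 0
  else (∑ i ∈ Finset.range n, sval M i ^ p.toReal) ^ (1 / p.toReal)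

/-- `σ_{r+1}^{(p)}(M)`, the optimal rank-`r` approximation error of `M` in the
Schatten `p`-norm: `(Σ_{i > r} σ_i(M)^p)^{1/p}` (for `p = ∞`, `σ_{r+1}(M)`). -/
noncomputable def tailNorm {n : ℕ} (p : ℝ≥0∞) (M : Matrix (Fin n) (Fin n) 𝕜)
    (r : ℕ) : ℝ :=
  if p = ∞ then sval M r
  else (∑ i ∈ Finset.Ico r n, sval M i ^ p.toReal) ^ (1 / p.toReal)

/-- `B` is a (simultaneous) best rank-`r` approximation of `M` with respect to every
Schatten `p`-norm; this is the defining property of an `r`-truncated SVD `⟦M⟧_r`. -/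
def IsBestRankApprox {n : ℕ} (M B : Matrix (Fin n) (Fin n) 𝕜) (r : ℕ) : Prop :=
  B.rank ≤ r ∧
    ∀ p : ℝ≥0∞, 1 ≤ p → ∀ C : Matrix (Fin n) (Fin n) 𝕜, C.rank ≤ r →
      schatten p (M - B) ≤ schatten p (M - C)

/-- `⟦M⟧_r`: a best rank-`r` approximation of `M` (an `r`-truncated SVD). -/
noncomputable def truncate {n : ℕ} (M : Matrix (Fin n) (Fin n) 𝕜) (r : ℕ) :
    Matrix (Fin n) (Fin n) 𝕜 :=
  if h : ∃ B, IsBestRankApprox M B r then h.choose else 0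

/-- The distribution of an `n × k` random matrix with independent standard normal
entries (matrices identified with functions `Fin n → Fin k → ℝ`). -/
noncomputable def gaussianEnsemble (n k : ℕ) : Measure (Fin n → Fin k → ℝ) :=
  Measure.pi fun _ => Measure.pi fun _ => gaussianReal 0 1

/-!
For positive semidefinite `A`, completing the square in `X` gives
`(1 - Ω X)* A (1 - Ω X) = (A - Â) + (X - Y)* (Ω* A Ω) (X - Y)` with `Y = (Ω* A Ω)† Ω* A`, so
`‖A - Â‖₁ = tr (A - Â)` is at most `tr ((1 - Ω X)* A (1 - Ω X))` for every `X`. By rotation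
invariance of `Ω` we may take `A = diag (σ₁, …, σₙ)`. Let the first `ϱ` columns of `X` be the system
dual to the first `ϱ` rows `x_i` of `Ω`, and the others zero. Then `1 - Ω X` vanishes on the first
`ϱ` rows, and conditionally on those rows the expected trace is at most `1 + ∑ ‖x_i^*‖²` times the
tail `∑_{i > ϱ} σ_i`, where `x_i^*` is the `i`-th dual vector. The norm of `x_i^*` is the inverse of
the distance of `x_i` to the span of the other rows; this distance is the norm of a standard
Gaussian vector `v` in dimension `k - ϱ + 1`, and `E ‖v‖⁻² = 1 / (k - ϱ - 1)`, by Tonelli's theorem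
and the Gaussian integral `E exp ((1 - u) ‖v‖² / 2) = u ^ (-(k - ϱ + 1) / 2)`, because
`‖v‖⁻² = 1 / 2 * ∫_{u > 1} exp ((1 - u) ‖v‖² / 2)`.
-/

section Nystrom

variable {m n k : ℕ}

lemma isMoorePenrose_pinv_of_exists {M : Matrix (Fin m) (Fin k) 𝕜}
    (h : ∃ X, IsMoorePenrose M X) : IsMoorePenrose M (pinv M) := by
  rw [pinv, dif_pos h]
  exact h.choose_spec

lemma isMoorePenrose_diagonal (d : Fin k → 𝕜) :
    IsMoorePenrose (diagonal d) (diagonal d⁻¹) := by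
  refine ⟨?_, ?_, ?_, ?_⟩ <;>
    simp only [diagonal_mul_diagonal, diagonal_conjTranspose] <;> congr 1 <;> ext i <;>
    by_cases h : d i = 0 <;> simp [h]

lemma IsMoorePenrose.map_starAlgEquiv {M X : Matrix (Fin k) (Fin k) 𝕜}
    (h : IsMoorePenrose M X)
    (φ : Matrix (Fin k) (Fin k) 𝕜 ≃⋆ₐ[𝕜] Matrix (Fin k) (Fin k) 𝕜) :
    IsMoorePenrose (φ M) (φ X) := by
  obtain ⟨hMXM, hXMX, hMX, hXM⟩ := h
  refine ⟨?_, ?_, ?_, ?_⟩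
  · rw [← map_mul, ← map_mul, hMXM]
  · rw [← map_mul, ← map_mul, hXMX]
  · rw [← map_mul, ← star_eq_conjTranspose, ← map_star, star_eq_conjTranspose, hMX]
  · rw [← map_mul, ← star_eq_conjTranspose, ← map_star, star_eq_conjTranspose, hXM]

lemma isMoorePenrose_pinv_of_isHermitian {M : Matrix (Fin k) (Fin k) 𝕜} (hM : M.IsHermitian) :
    IsMoorePenrose M (pinv M) := by
  refine isMoorePenrose_pinv_of_exists
    ⟨Unitary.conjStarAlgAut 𝕜 _ hM.eigenvectorUnitary (diagonal (RCLike.ofReal ∘ hM.eigenvalues)⁻¹),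
      ?_⟩
  conv_lhs => rw [hM.spectral_theorem]
  exact (isMoorePenrose_diagonal _).map_starAlgEquiv _

/-- The coefficient matrix `Y = (Ω* A Ω)† Ω* A`, for which `Â = A Ω Y`. Among all `X`, it
minimises the residual `(1 - Ω X)* A (1 - Ω X)`. -/
noncomputable def nystromCoeff (A : Matrix (Fin n) (Fin n) 𝕜) (Ω : Matrix (Fin n) (Fin k) 𝕜) :
    Matrix (Fin k) (Fin n) 𝕜 :=
  pinv (Ωᴴ * A * Ω) * Ωᴴ * A

variable {A : Matrix (Fin n) (Fin n) 𝕜}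

lemma nystrom_eq_mul_nystromCoeff (A : Matrix (Fin n) (Fin n) 𝕜) (Ω : Matrix (Fin n) (Fin k) 𝕜) :
    nystrom A Ω = A * Ω * nystromCoeff A Ω := by
  simp only [nystrom, nystromCoeff, Matrix.mul_assoc]

open scoped MatrixOrder in
lemma sketch_mul_nystromCoeff (hA : A.PosSemidef) (Ω : Matrix (Fin n) (Fin k) 𝕜) :
    Ωᴴ * A * Ω * nystromCoeff A Ω = Ωᴴ * A := by
  set M := Ωᴴ * A * Ω with hM
  have hMP : (1 - M * pinv M) * M = 0 := by
    rw [Matrix.sub_mul, Matrix.one_mul,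
      (isMoorePenrose_pinv_of_isHermitian (hA.conjTranspose_mul_mul_same Ω).1).1, sub_self]
  obtain ⟨B, rfl⟩ := CStarAlgebra.nonneg_iff_eq_star_mul_self.mp hA.nonneg
  have hΩB : (1 - M * pinv M) * (Ωᴴ * Bᴴ) = 0 := by
    rw [← mul_self_mul_conjTranspose_eq_zero, ← hMP, hM]
    simp only [star_eq_conjTranspose, conjTranspose_mul, conjTranspose_conjTranspose,
      Matrix.mul_assoc]
  have hΩA : (1 - M * pinv M) * (Ωᴴ * (star B * B)) = 0 := by
    rw [star_eq_conjTranspose, ← Matrix.mul_assoc Ωᴴ, ← Matrix.mul_assoc, hΩB, Matrix.zero_mul]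
  rw [Matrix.sub_mul, Matrix.one_mul, sub_eq_zero] at hΩA
  rw [nystromCoeff, ← hM]
  simpa only [Matrix.mul_assoc] using hΩA.symm

lemma conjTranspose_nystromCoeff_mul_sketch (hA : A.PosSemidef) (Ω : Matrix (Fin n) (Fin k) 𝕜) :
    (nystromCoeff A Ω)ᴴ * (Ωᴴ * A * Ω) = A * Ω := by
  have h := congrArg conjTranspose (sketch_mul_nystromCoeff hA Ω)
  rwa [conjTranspose_mul, (hA.conjTranspose_mul_mul_same Ω).1.eq, conjTranspose_mul Ωᴴ, hA.1.eq,
    conjTranspose_conjTranspose] at h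

lemma residual_eq_sub_nystrom_add (hA : A.PosSemidef) (Ω : Matrix (Fin n) (Fin k) 𝕜)
    (X : Matrix (Fin k) (Fin n) 𝕜) :
    (1 - Ω * X)ᴴ * A * (1 - Ω * X) = A - nystrom A Ω +
      (X - nystromCoeff A Ω)ᴴ * (Ωᴴ * A * Ω) * (X - nystromCoeff A Ω) := by
  have hexpand : (1 - Ω * X)ᴴ * A * (1 - Ω * X)
      = A - Xᴴ * (Ωᴴ * A) - A * Ω * X + Xᴴ * (Ωᴴ * A * Ω) * X := by
    rw [conjTranspose_sub, conjTranspose_one, conjTranspose_mul]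
    simp only [Matrix.sub_mul, Matrix.mul_sub, Matrix.one_mul, Matrix.mul_one, Matrix.mul_assoc]
    abel
  rw [hexpand, nystrom_eq_mul_nystromCoeff]
  have hMY := sketch_mul_nystromCoeff hA Ω
  have hYM := conjTranspose_nystromCoeff_mul_sketch hA Ω
  set M := Ωᴴ * A * Ω
  rw [← hMY, ← hYM, conjTranspose_sub]
  simp only [Matrix.sub_mul, Matrix.mul_sub, Matrix.mul_assoc]
  abel

lemma posSemidef_sub_nystrom (hA : A.PosSemidef) (Ω : Matrix (Fin n) (Fin k) 𝕜) :
    (A - nystrom A Ω).PosSemidef := by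
  have h := residual_eq_sub_nystrom_add hA Ω (nystromCoeff A Ω)
  rw [sub_self, Matrix.mul_zero, add_zero] at h
  exact h ▸ hA.conjTranspose_mul_mul_same (1 - Ω * nystromCoeff A Ω)

lemma isLeast_trace_sub_nystrom (hA : A.PosSemidef) (Ω : Matrix (Fin n) (Fin k) 𝕜) :
    IsLeast (Set.range fun X : Matrix (Fin k) (Fin n) 𝕜 =>
        ((1 - Ω * X)ᴴ * A * (1 - Ω * X)).trace) (A - nystrom A Ω).trace := by
  simp only [residual_eq_sub_nystrom_add hA, trace_add]
  refine ⟨⟨nystromCoeff A Ω, by simp⟩, ?_⟩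
  rintro _ ⟨X, rfl⟩
  exact le_add_of_nonneg_right
    ((hA.conjTranspose_mul_mul_same Ω).conjTranspose_mul_mul_same _).trace_nonneg

lemma trace_sub_nystrom_le_trace (hA : A.PosSemidef) (Ω : Matrix (Fin n) (Fin k) 𝕜) :
    (A - nystrom A Ω).trace ≤ A.trace :=
  (isLeast_trace_sub_nystrom hA Ω).2 ⟨0, by simp⟩

lemma trace_conj_sub_nystrom (A : Matrix (Fin n) (Fin n) 𝕜) (Ω : Matrix (Fin n) (Fin k) 𝕜)
    {U : Matrix (Fin n) (Fin n) 𝕜} (hU : U ∈ unitary (Matrix (Fin n) (Fin n) 𝕜)) :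
    (U * A * Uᴴ - nystrom (U * A * Uᴴ) (U * Ω)).trace = (A - nystrom A Ω).trace := by
  have hUU : Uᴴ * U = 1 := hU.1
  have hcancel : ∀ {l : ℕ} (B : Matrix (Fin n) (Fin l) 𝕜), Uᴴ * (U * B) = B := fun B => by
    rw [← Matrix.mul_assoc, hUU, Matrix.one_mul]
  have hconj : U * A * Uᴴ - nystrom (U * A * Uᴴ) (U * Ω) = U * ((A - nystrom A Ω) * Uᴴ) := by
    simp only [nystrom, conjTranspose_mul, Matrix.mul_assoc, hcancel, Matrix.sub_mul,
      Matrix.mul_sub]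
  rw [hconj, trace_mul_comm, Matrix.mul_assoc, hUU, Matrix.mul_one]

end Nystrom

section SingularValues

variable {n : ℕ} {A : Matrix (Fin n) (Fin n) 𝕜} {ι : Type*} [Fintype ι] [DecidableEq ι]

lemma sval_nonneg (A : Matrix (Fin n) (Fin n) 𝕜) (i : ℕ) : 0 ≤ sval A i := by
  unfold sval
  split_ifs
  exacts [Real.sqrt_nonneg _, le_rfl]

open scoped MatrixOrder in
lemma eq_conj_diagonal_sqrt_eigenvalues (hA : A.PosSemidef) (hAA : (Aᴴ * A).IsHermitian) :
    A = Unitary.conjStarAlgAut 𝕜 _ hAA.eigenvectorUnitary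
      (diagonal fun i => ((√(hAA.eigenvalues i) : ℝ) : 𝕜)) := by
  have hroot : (diagonal fun i => ((√(hAA.eigenvalues i) : ℝ) : 𝕜)).PosSemidef :=
    PosSemidef.diagonal fun i => RCLike.ofReal_nonneg.2 (Real.sqrt_nonneg _)
  refine (CFC.mul_self_eq_mul_self_iff _ _ hA.nonneg (map_nonneg _ hroot.nonneg)).1 ?_
  rw [← map_mul, diagonal_mul_diagonal]
  simp only [← RCLike.ofReal_mul,
    Real.mul_self_sqrt ((posSemidef_conjTranspose_mul_self A).eigenvalues_nonneg _)]
  exact (congrArg (· * A) hA.1.eq.symm).trans hAA.spectral_theorem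

lemma submatrix_id_equiv_mem_unitary {U : Matrix ι ι 𝕜} (hU : U ∈ unitary (Matrix ι ι 𝕜))
    (σ : Equiv.Perm ι) : U.submatrix id σ ∈ unitary (Matrix ι ι 𝕜) := by
  refine Unitary.mem_iff.2 ⟨?_, ?_⟩ <;> rw [star_eq_conjTranspose, conjTranspose_submatrix]
  · rw [← submatrix_mul _ _ _ _ _ Function.bijective_id, ← star_eq_conjTranspose, hU.1,
      submatrix_one_equiv]
  · rw [← submatrix_mul _ _ _ _ _ σ.bijective, ← star_eq_conjTranspose, hU.2, submatrix_id_id]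

lemma submatrix_mul_diagonal_comp_mul_conjTranspose (U : Matrix ι ι 𝕜) (d : ι → 𝕜)
    (σ : Equiv.Perm ι) :
    U.submatrix id σ * diagonal (d ∘ σ) * (U.submatrix id σ)ᴴ = U * diagonal d * Uᴴ := by
  rw [← submatrix_diagonal_equiv, conjTranspose_submatrix, ← submatrix_mul _ _ _ _ _ σ.bijective,
    ← submatrix_mul _ _ _ _ _ σ.bijective, submatrix_id_id]

lemma exists_unitary_eq_mul_diagonal_sval (hA : A.PosSemidef) :
    ∃ U ∈ unitary (Matrix (Fin n) (Fin n) 𝕜),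
      A = U * diagonal (fun i : Fin n => (sval A i : 𝕜)) * Uᴴ := by
  have hAA := (posSemidef_conjTranspose_mul_self A).1
  set σ : Equiv.Perm (Fin n) := Fin.revPerm.trans (Tuple.sort hAA.eigenvalues) with hσ
  have hsval : (fun i : Fin n => (sval A i : 𝕜))
      = (fun i => ((√(hAA.eigenvalues i) : ℝ) : 𝕜)) ∘ σ := by
    ext i
    simp [sval, hσ]
  refine ⟨_, submatrix_id_equiv_mem_unitary hAA.eigenvectorUnitary.2 σ, ?_⟩
  rw [hsval, submatrix_mul_diagonal_comp_mul_conjTranspose]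
  exact (eq_conj_diagonal_sqrt_eigenvalues hA hAA).trans (Unitary.conjStarAlgAut_apply ..)

lemma schatten_one_eq_trace (hA : A.PosSemidef) : (schatten 1 A : 𝕜) = A.trace := by
  obtain ⟨U, hU, hAU⟩ := exists_unitary_eq_mul_diagonal_sval hA
  have hUU : Uᴴ * U = 1 := hU.1
  have htrace : A.trace = ∑ i : Fin n, (sval A i : 𝕜) := by
    conv_lhs => rw [hAU, trace_mul_comm, ← Matrix.mul_assoc, hUU, Matrix.one_mul, trace_diagonal]
  rw [htrace]
  simp [schatten, Finset.sum_range]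

end SingularValues

section InverseMoment

variable {E : Type*} [NormedAddCommGroup E] [InnerProductSpace ℝ E] [FiniteDimensional ℝ E]
  [MeasurableSpace E] [BorelSpace E]

lemma integral_exp_mul_sq_gaussianReal {u : ℝ} (hu : 0 < u) :
    ∫ x, Real.exp ((1 - u) / 2 * x ^ 2) ∂gaussianReal 0 1 = u ^ (-(1 / 2) : ℝ) := by
  have hdensity (x : ℝ) : gaussianPDFReal 0 1 x • Real.exp ((1 - u) / 2 * x ^ 2)
      = (√(2 * Real.pi))⁻¹ * Real.exp (-(u / 2) * x ^ 2) := by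
    simp only [gaussianPDFReal, smul_eq_mul, mul_assoc, ← Real.exp_add, NNReal.coe_one, mul_one,
      sub_zero]
    ring_nf
  simp only [integral_gaussianReal_eq_integral_smul one_ne_zero, hdensity]
  rw [integral_const_mul, integral_gaussian, ← Real.sqrt_inv, ← Real.sqrt_mul (by positivity),
    Real.rpow_neg hu.le, ← Real.sqrt_eq_rpow, ← Real.sqrt_inv]
  congr 1
  field_simp

lemma integral_exp_mul_norm_sq_stdGaussian {u : ℝ} (hu : 0 < u) :
    ∫ v, Real.exp ((1 - u) / 2 * ‖v‖ ^ 2) ∂stdGaussian E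
      = u ^ (-(Module.finrank ℝ E / 2) : ℝ) := by
  have hnorm (x : Fin (Module.finrank ℝ E) → ℝ) :
      ‖∑ i, x i • stdOrthonormalBasis ℝ E i‖ ^ 2 = ∑ i, x i ^ 2 := by
    rw [← (stdOrthonormalBasis ℝ E).sum_sq_norm_inner_right]
    simp [(stdOrthonormalBasis ℝ E).orthonormal.inner_right_fintype]
  rw [stdGaussian, integral_map (Measurable.aemeasurable (by fun_prop)) (by fun_prop)]
  simp only [hnorm, Finset.mul_sum, Real.exp_sum]
  rw [integral_fintype_prod_eq_pow (fun x => Real.exp ((1 - u) / 2 * x ^ 2)),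
    integral_exp_mul_sq_gaussianReal hu, ← Real.rpow_mul_natCast hu.le, Fintype.card_fin]
  ring_nf

lemma lintegral_exp_Ioi_one {s : ℝ} (hs : 0 ≤ s) :
    ∫⁻ u in Set.Ioi (1 : ℝ), ENNReal.ofReal (Real.exp ((1 - u) / 2 * s))
      = 2 * (ENNReal.ofReal s)⁻¹ := by
  rcases hs.eq_or_lt with rfl | hs
  · simp
  have hexp (u : ℝ) : Real.exp ((1 - u) / 2 * s) = Real.exp (s / 2) * Real.exp (-(s / 2) * u) := by
    rw [← Real.exp_add]
    ring_nf
  have hint := integrableOn_exp_mul_Ioi (by linarith : -(s / 2) < 0) 1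
  simp only [hexp]
  rw [← ofReal_integral_eq_lintegral_ofReal (hint.const_mul _)
    (ae_of_all _ fun u => by positivity), integral_const_mul, integral_exp_mul_Ioi (by linarith),
    ← ENNReal.ofReal_inv_of_pos hs, ← ENNReal.ofReal_ofNat 2, ← ENNReal.ofReal_mul zero_le_two,
    mul_one, neg_div_neg_eq, mul_div_assoc', ← Real.exp_add, add_neg_cancel, Real.exp_zero]
  congr 1
  field_simp

lemma lintegral_rpow_Ioi_one {a : ℝ} (ha : a < -1) :
    ∫⁻ u in Set.Ioi (1 : ℝ), ENNReal.ofReal (u ^ a) = ENNReal.ofReal (-(a + 1))⁻¹ := by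
  have hnonneg : ∀ᵐ u : ℝ ∂volume.restrict (Set.Ioi 1), 0 ≤ u ^ a :=
    ae_restrict_of_forall_mem measurableSet_Ioi fun u hu =>
      Real.rpow_nonneg (zero_le_one.trans hu.le) a
  rw [← ofReal_integral_eq_lintegral_ofReal (integrableOn_Ioi_rpow_of_lt ha one_pos) hnonneg,
    integral_Ioi_rpow_of_lt ha one_pos, Real.one_rpow, inv_neg, neg_div, one_div]

lemma lintegral_inv_enorm_sq_stdGaussian (hE : 2 < Module.finrank ℝ E) :
    ∫⁻ v, (‖v‖ₑ ^ 2)⁻¹ ∂stdGaussian E = ((Module.finrank ℝ E - 2 : ℕ) : ℝ≥0∞)⁻¹ := by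
  have hd : (2 : ℝ) < Module.finrank ℝ E := by exact_mod_cast hE
  have hinv (v : E) : (‖v‖ₑ ^ 2)⁻¹ = 2⁻¹ * ∫⁻ u in Set.Ioi (1 : ℝ),
      ENNReal.ofReal (Real.exp ((1 - u) / 2 * ‖v‖ ^ 2)) := by
    rw [lintegral_exp_Ioi_one (sq_nonneg _), ENNReal.inv_mul_cancel_left two_ne_zero (by simp),
      ENNReal.ofReal_pow (norm_nonneg v), ofReal_norm]
  have hlaplace (u : ℝ) (hu : u ∈ Set.Ioi (1 : ℝ)) :
      ∫⁻ v, ENNReal.ofReal (Real.exp ((1 - u) / 2 * ‖v‖ ^ 2)) ∂stdGaussian E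
        = ENNReal.ofReal (u ^ (-(Module.finrank ℝ E / 2) : ℝ)) := by
    have hu0 : 0 < u := one_pos.trans hu
    have hval := integral_exp_mul_norm_sq_stdGaussian (E := E) hu0
    rw [← hval, ofReal_integral_eq_lintegral_ofReal
      (.of_integral_ne_zero (hval ▸ (Real.rpow_pos_of_pos hu0 _).ne'))
      (ae_of_all _ fun v => (Real.exp_pos _).le)]
  simp only [hinv]
  rw [lintegral_const_mul _ (by fun_prop), lintegral_lintegral_swap (by fun_prop),
    setLIntegral_congr_fun measurableSet_Ioi hlaplace, lintegral_rpow_Ioi_one (by linarith),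
    ← ENNReal.ofReal_natCast, Nat.cast_sub hE.le, ← ENNReal.ofReal_ofNat 2,
    ← ENNReal.ofReal_inv_of_pos two_pos, ← ENNReal.ofReal_inv_of_pos (by simpa using hd),
    ← ENNReal.ofReal_mul (by positivity), ← mul_inv]
  congr 2
  push_cast
  ring

end InverseMoment

section GaussianVectors

variable {E : Type*} [NormedAddCommGroup E] [InnerProductSpace ℝ E] {ι : Type*} [Fintype ι]

lemma sum_norm_sq_sum_smul [DecidableEq ι] {U : Matrix ι ι ℝ} (hU : U ∈ unitary (Matrix ι ι ℝ))
    (x : ι → E) : ∑ i, ‖∑ j, U i j • x j‖ ^ 2 = ∑ i, ‖x i‖ ^ 2 := by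
  have hUU (j l : ι) : ∑ i, U i j * U i l = (1 : Matrix ι ι ℝ) j l := by
    rw [← hU.1]
    simp [mul_apply, star_apply]
  simp only [← real_inner_self_eq_norm_sq, sum_inner, inner_sum, real_inner_smul_left,
    real_inner_smul_right, ← mul_assoc]
  rw [Finset.sum_comm]
  refine Finset.sum_congr rfl fun j _ => ?_
  rw [Finset.sum_comm]
  simp only [← Finset.sum_mul, hUU, one_apply, ite_mul, one_mul, zero_mul, Finset.sum_ite_eq,
    Finset.mem_univ, if_true]

variable [FiniteDimensional ℝ E] [MeasurableSpace E] [BorelSpace E]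

lemma lintegral_enorm_inner_sq_stdGaussian (z : E) :
    ∫⁻ x, ‖inner ℝ z x‖ₑ ^ 2 ∂stdGaussian E = ‖z‖ₑ ^ 2 := by
  have hmean : ∫ x, inner ℝ z x ∂stdGaussian E = 0 :=
    integral_strongDual_stdGaussian (innerSL ℝ z)
  have hmem : MemLp (innerSL ℝ z) 2 (stdGaussian E) := IsGaussian.memLp_dual _ _ 2 (by simp)
  calc ∫⁻ x, ‖inner ℝ z x‖ₑ ^ 2 ∂stdGaussian E
      = evariance (innerSL ℝ z) (stdGaussian E) := by
        simp only [evariance, innerSL_apply_apply, hmean, sub_zero]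
    _ = ENNReal.ofReal (Var[innerSL ℝ z; stdGaussian E]) := hmem.ofReal_variance_eq.symm
    _ = ‖z‖ₑ ^ 2 := by
        rw [variance_dual_stdGaussian, innerSL_apply_norm, ENNReal.ofReal_pow (norm_nonneg z),
          ofReal_norm]

lemma lintegral_sum_mul_one_add_inner_sq {κ : Type*} [Fintype κ] {d : κ → ℝ} (hd : ∀ j, 0 ≤ d j)
    (v : ι → E) :
    ∫⁻ y, ENNReal.ofReal (∑ j, d j * (1 + ∑ i, inner ℝ (v i) (y j) ^ 2))
        ∂Measure.pi (fun _ : κ => stdGaussian E)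
      = (1 + ∑ i, ‖v i‖ₑ ^ 2) * ∑ j, ENNReal.ofReal (d j) := by
  have hrow (j : κ) (i : ι) : ∫⁻ y, ‖inner ℝ (v i) (y j)‖ₑ ^ 2
      ∂Measure.pi (fun _ : κ => stdGaussian E) = ‖v i‖ₑ ^ 2 := by
    rw [← lintegral_enorm_inner_sq_stdGaussian]
    exact (measurePreserving_eval (fun _ : κ => stdGaussian E) j).lintegral_comp
      (f := fun x => ‖inner ℝ (v i) x‖ₑ ^ 2) (by fun_prop)
  have hofReal (y : κ → E) :
      ENNReal.ofReal (∑ j, d j * (1 + ∑ i, inner ℝ (v i) (y j) ^ 2))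
        = ∑ j, ENNReal.ofReal (d j) * (1 + ∑ i, ‖inner ℝ (v i) (y j)‖ₑ ^ 2) := by
    rw [ENNReal.ofReal_sum_of_nonneg fun j _ => mul_nonneg (hd j) (by positivity)]
    refine Finset.sum_congr rfl fun j _ => ?_
    rw [ENNReal.ofReal_mul (hd j), ENNReal.ofReal_add zero_le_one (by positivity),
      ENNReal.ofReal_one, ENNReal.ofReal_sum_of_nonneg fun i _ => sq_nonneg _]
    simp only [← Real.enorm_eq_ofReal (sq_nonneg _), enorm_pow]
  simp only [hofReal]
  rw [lintegral_finsetSum _ fun j _ => by fun_prop, Finset.mul_sum]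
  refine Finset.sum_congr rfl fun j _ => ?_
  rw [lintegral_const_mul _ (by fun_prop), lintegral_add_left measurable_const,
    lintegral_finsetSum _ fun i _ => by fun_prop, mul_comm]
  simp only [lintegral_const, measure_univ, mul_one, hrow]

lemma map_orthogonalProjectionOnto_stdGaussian (V : Submodule ℝ E) :
    (stdGaussian E).map V.orthogonalProjectionOnto = stdGaussian V := by
  have := Measure.isFiniteMeasure_map (stdGaussian E) V.orthogonalProjectionOnto
  refine Measure.ext_of_charFun (funext fun t => ?_)
  have hE := charFun_stdGaussian (t : E)
  rw [charFun_apply] at hE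
  rw [charFun_stdGaussian, charFun_apply, integral_map (by fun_prop) (by fun_prop)]
  simp only [Submodule.inner_orthogonalProjectionOnto_eq_of_mem_right]
  exact hE

lemma map_toLp_pi_stdGaussian :
    (Measure.pi fun _ : ι => stdGaussian E).map (WithLp.toLp 2)
      = stdGaussian (PiLp 2 fun _ : ι => E) := by
  have := Measure.isFiniteMeasure_map (Measure.pi fun _ : ι => stdGaussian E) (WithLp.toLp 2)
  refine Measure.ext_of_charFun (funext fun t => ?_)
  simp only [charFun_pi, charFun_stdGaussian, ← Complex.exp_sum, ← Complex.ofReal_pow,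
    PiLp.norm_sq_eq_of_L2, Complex.ofReal_sum, ← Finset.sum_div, Finset.sum_neg_distrib]

lemma measurePreserving_sum_smul_pi_stdGaussian [DecidableEq ι] {U : Matrix ι ι ℝ}
    (hU : U ∈ unitary (Matrix ι ι ℝ)) :
    MeasurePreserving (fun (x : ι → E) i => ∑ j, U i j • x j)
      (Measure.pi fun _ => stdGaussian E) (Measure.pi fun _ => stdGaussian E) := by
  let rotation : (PiLp 2 fun _ : ι => E) →ₗᵢ[ℝ] PiLp 2 fun _ : ι => E :=
    { toFun x := WithLp.toLp 2 fun i => ∑ j, U i j • x j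
      map_add' x y := by ext i; simp [Finset.sum_add_distrib]
      map_smul' c x := by ext i; simp [Finset.smul_sum, smul_comm c]
      norm_map' x := by
        rw [← sq_eq_sq₀ (norm_nonneg _) (norm_nonneg _), PiLp.norm_sq_eq_of_L2,
          PiLp.norm_sq_eq_of_L2]
        exact sum_norm_sq_sum_smul hU x }
  have hrotation := stdGaussian_map (rotation.toLinearIsometryEquiv rfl)
  rw [← map_toLp_pi_stdGaussian, Measure.map_map (by fun_prop) (by fun_prop)] at hrotation
  refine ⟨by fun_prop, (MeasurableEquiv.toLp 2 (ι → E)).map_measurableEquiv_injective ?_⟩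
  rw [MeasurableEquiv.coe_toLp, Measure.map_map (by fun_prop) (by fun_prop)]
  exact hrotation

end GaussianVectors

section DualSystem

variable {E : Type*} [NormedAddCommGroup E] [InnerProductSpace ℝ E] [FiniteDimensional ℝ E]
  {ι : Type*}

/-- The span of all vectors of the family `x` except `x i`. -/
def spanOthers (x : ι → E) (i : ι) : Submodule ℝ E :=
  Submodule.span ℝ (Set.range fun l : {l // l ≠ i} => x l)

/-- The component of `x i` orthogonal to the other vectors of the family. -/
noncomputable def orthComponent (x : ι → E) (i : ι) : E :=
  (spanOthers x i)ᗮ.starProjection (x i)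

/-- The system biorthogonal to the family `x`. When `x` is linearly independent, these are the
columns of the pseudoinverse of the matrix with rows `x i`. -/
noncomputable def dualVector (x : ι → E) (i : ι) : E :=
  (‖orthComponent x i‖ ^ 2)⁻¹ • orthComponent x i

lemma orthComponent_mem_orthogonal (x : ι → E) (i : ι) :
    orthComponent x i ∈ (spanOthers x i)ᗮ :=
  Submodule.starProjection_apply_mem _ _

lemma inner_orthComponent_self (x : ι → E) (i : ι) :
    inner ℝ (orthComponent x i) (x i) = ‖orthComponent x i‖ ^ 2 := by
  rw [← real_inner_self_eq_norm_sq, ← sub_eq_zero, ← inner_sub_right]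
  exact Submodule.inner_right_of_mem_orthogonal (orthComponent_mem_orthogonal x i)
    (Submodule.sub_starProjection_mem_orthogonal _)

lemma inner_dualVector_self {x : ι → E} {i : ι} (hi : orthComponent x i ≠ 0) :
    inner ℝ (dualVector x i) (x i) = 1 := by
  rw [dualVector, real_inner_smul_left, inner_orthComponent_self,
    inv_mul_cancel₀ (pow_ne_zero 2 (norm_ne_zero_iff.2 hi))]

lemma inner_dualVector_of_ne (x : ι → E) {i l : ι} (hl : l ≠ i) :
    inner ℝ (dualVector x i) (x l) = 0 := by
  have hmem : x l ∈ spanOthers x i := Submodule.subset_span ⟨⟨l, hl⟩, rfl⟩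
  rw [dualVector, real_inner_smul_left, Submodule.inner_left_of_mem_orthogonal hmem
    (orthComponent_mem_orthogonal x i), mul_zero]

lemma inner_dualVector [DecidableEq ι] {x : ι → E} (hx : ∀ i, orthComponent x i ≠ 0) (i l : ι) :
    inner ℝ (dualVector x i) (x l) = if i = l then 1 else 0 := by
  split_ifs with h
  · exact h ▸ inner_dualVector_self (hx i)
  · exact inner_dualVector_of_ne x (Ne.symm h)

lemma enorm_dualVector_sq_le (x : ι → E) (i : ι) :
    ‖dualVector x i‖ₑ ^ 2 ≤ (‖orthComponent x i‖ₑ ^ 2)⁻¹ := by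
  rcases eq_or_ne (orthComponent x i) 0 with h | h
  · simp [h]
  have hnorm : ‖dualVector x i‖ = ‖orthComponent x i‖⁻¹ := by
    have := norm_ne_zero_iff.2 h
    rw [dualVector, norm_smul, norm_inv, norm_pow, norm_norm]
    field_simp
  rw [← ofReal_norm, hnorm, ENNReal.ofReal_inv_of_pos (norm_pos_iff.2 h), ofReal_norm,
    ENNReal.inv_pow]

lemma orthComponent_update (x : ι → E) (i : ι) (y : E) :
    orthComponent (Function.update x i y) i = (spanOthers x i)ᗮ.starProjection y := by
  have hspan : spanOthers (Function.update x i y) i = spanOthers x i := by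
    unfold spanOthers
    congr 2
    exact funext fun l => Function.update_of_ne l.2 _ _
  simp only [orthComponent, hspan, Function.update_self]

lemma finrank_add_one_le_finrank_orthogonal_spanOthers_add [Fintype ι] (x : ι → E) (i : ι) :
    Module.finrank ℝ E + 1 ≤ Module.finrank ℝ (spanOthers x i)ᗮ + Fintype.card ι := by
  have hsum := Submodule.finrank_add_finrank_orthogonal (spanOthers x i)
  have hspan : Module.finrank ℝ (spanOthers x i) ≤ Fintype.card {l // l ≠ i} :=
    finrank_range_le_card _
  have hcompl : Fintype.card {l // l ≠ i} < Fintype.card ι :=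
    Fintype.card_subtype_lt (x := i) (by simp)
  lia

lemma norm_orthComponent_le (x : ι → E) (i : ι) {v : E} (hv : v ∈ spanOthers x i) :
    ‖orthComponent x i‖ ≤ ‖x i - v‖ := by
  have hproj : orthComponent x i = (spanOthers x i)ᗮ.starProjection (x i - v) := by
    rw [map_sub, Submodule.starProjection_orthogonal_apply_eq_zero hv, sub_zero, orthComponent]
  rw [hproj]
  exact Submodule.norm_starProjection_apply_le _ _

lemma enorm_orthComponent_eq_iInf [Fintype ι] (x : ι → E) (i : ι) :
    ‖orthComponent x i‖ₑ = ⨅ c : {l // l ≠ i} → ℝ, ‖x i - ∑ l, c l • x l‖ₑ := by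
  refine le_antisymm (le_iInf fun c => ?_) ?_
  · simp only [← ofReal_norm]
    exact ENNReal.ofReal_le_ofReal (norm_orthComponent_le x i
      (Submodule.sum_mem _ fun l _ => Submodule.smul_mem _ _ (Submodule.subset_span ⟨l, rfl⟩)))
  · have hmem : x i - orthComponent x i ∈ spanOthers x i := by
      rw [← (spanOthers x i).orthogonal_orthogonal]
      exact Submodule.sub_starProjection_mem_orthogonal _
    obtain ⟨c, hc⟩ := (Submodule.mem_span_range_iff_exists_fun ℝ).1 hmem
    refine (iInf_le _ c).trans_eq ?_
    rw [hc, sub_sub_cancel]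

variable [MeasurableSpace E] [BorelSpace E]

lemma measurable_enorm_orthComponent [Finite ι] (i : ι) :
    Measurable fun x : ι → E => ‖orthComponent x i‖ₑ := by
  have := Fintype.ofFinite ι
  simp only [enorm_orthComponent_eq_iInf]
  exact (upperSemicontinuous_iInf fun c => Continuous.upperSemicontinuous (by fun_prop)).measurable

lemma lintegral_inv_enorm_sq_starProjection_stdGaussian (V : Submodule ℝ E)
    (hV : 2 < Module.finrank ℝ V) :
    ∫⁻ x, (‖V.starProjection x‖ₑ ^ 2)⁻¹ ∂stdGaussian E
      = ((Module.finrank ℝ V - 2 : ℕ) : ℝ≥0∞)⁻¹ := by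
  rw [← lintegral_inv_enorm_sq_stdGaussian hV, ← map_orthogonalProjectionOnto_stdGaussian,
    lintegral_map (by fun_prop) (by fun_prop)]
  rfl

variable [Fintype ι]

-- Conditionally on the other vectors, `orthComponent x i` is a standard Gaussian vector in a space
-- of dimension at least `finrank ℝ E - card ι + 1`.
lemma lintegral_inv_enorm_sq_orthComponent_le (hE : Fintype.card ι + 1 < Module.finrank ℝ E)
    (i : ι) :
    ∫⁻ x, (‖orthComponent x i‖ₑ ^ 2)⁻¹ ∂Measure.pi (fun _ : ι => stdGaussian E)
      ≤ ((Module.finrank ℝ E - Fintype.card ι - 1 : ℕ) : ℝ≥0∞)⁻¹ := by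
  have hmeas := measurable_enorm_orthComponent (E := E) i
  set C : ℝ≥0∞ := ((Module.finrank ℝ E - Fintype.card ι - 1 : ℕ) : ℝ≥0∞)⁻¹
  calc ∫⁻ x, (‖orthComponent x i‖ₑ ^ 2)⁻¹ ∂Measure.pi (fun _ : ι => stdGaussian E)
      ≤ ∫⁻ _, C ∂Measure.pi (fun _ : ι => stdGaussian E) := by
        refine lintegral_le_of_lmarginal_le {i} (by fun_prop) measurable_const fun x => ?_
        have hdim := finrank_add_one_le_finrank_orthogonal_spanOthers_add x i
        simp only [lmarginal_singleton, orthComponent_update, lintegral_const, measure_univ,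
          mul_one]
        rw [lintegral_inv_enorm_sq_starProjection_stdGaussian _ (by lia)]
        exact ENNReal.inv_le_inv.2 (Nat.cast_le.2 (by lia))
    _ = C := by rw [lintegral_const, measure_univ, mul_one]

lemma ae_forall_orthComponent_ne_zero (hE : Fintype.card ι + 1 < Module.finrank ℝ E) :
    ∀ᵐ x ∂Measure.pi (fun _ : ι => stdGaussian E), ∀ i, orthComponent x i ≠ 0 := by
  refine ae_all_iff.2 fun i => ?_
  have hmeas := measurable_enorm_orthComponent (E := E) i
  have hfinite := (lintegral_inv_enorm_sq_orthComponent_le hE i).trans_lt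
    (ENNReal.inv_lt_top.2 (Nat.cast_pos.2 (by lia)))
  filter_upwards [ae_lt_top (by fun_prop) hfinite.ne] with x hx h
  simp [h] at hx

lemma lintegral_sum_enorm_dualVector_sq_le (hE : Fintype.card ι + 1 < Module.finrank ℝ E) :
    ∫⁻ x, ∑ i, ‖dualVector x i‖ₑ ^ 2 ∂Measure.pi (fun _ : ι => stdGaussian E)
      ≤ Fintype.card ι * ((Module.finrank ℝ E - Fintype.card ι - 1 : ℕ) : ℝ≥0∞)⁻¹ := by
  have hmeas (i : ι) := measurable_enorm_orthComponent (E := E) i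
  calc ∫⁻ x, ∑ i, ‖dualVector x i‖ₑ ^ 2 ∂Measure.pi (fun _ : ι => stdGaussian E)
      ≤ ∫⁻ x, ∑ i, (‖orthComponent x i‖ₑ ^ 2)⁻¹ ∂Measure.pi (fun _ : ι => stdGaussian E) :=
        lintegral_mono fun x => Finset.sum_le_sum fun i _ => enorm_dualVector_sq_le x i
    _ = ∑ i, ∫⁻ x, (‖orthComponent x i‖ₑ ^ 2)⁻¹ ∂Measure.pi (fun _ : ι => stdGaussian E) :=
        lintegral_finsetSum _ fun i _ => by fun_prop
    _ ≤ _ := by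
        refine (Finset.sum_le_card_nsmul _ _ _ fun i _ =>
          lintegral_inv_enorm_sq_orthComponent_le hE i).trans_eq ?_
        rw [Finset.card_univ, nsmul_eq_mul]

end DualSystem

section RowInterpolation

variable {n k : ℕ} {p : Fin n → Prop} [DecidablePred p]

/-- The `n × k` matrix whose rows are the vectors `x i`. -/
def rowMatrix (x : Fin n → EuclideanSpace ℝ (Fin k)) : Matrix (Fin n) (Fin k) ℝ :=
  Matrix.of fun i => (x i).ofLp

/-- The `k × n` matrix whose `i`-th column is `v i` where `p i` holds, and zero elsewhere. If `v`
is dual to the rows of `Ω` satisfying `p`, then `1 - Ω * columnMatrix v` vanishes on these rows. -/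
def columnMatrix (v : {i // p i} → EuclideanSpace ℝ (Fin k)) : Matrix (Fin k) (Fin n) ℝ :=
  Matrix.of fun a i => if h : p i then v ⟨i, h⟩ a else 0

lemma rowMatrix_mul_columnMatrix_apply (x : Fin n → EuclideanSpace ℝ (Fin k))
    (v : {i // p i} → EuclideanSpace ℝ (Fin k)) (j : Fin n) (i : {i // p i}) :
    (rowMatrix x * columnMatrix v) j i = inner ℝ (v i) (x j) := by
  simp [rowMatrix, columnMatrix, mul_apply, i.2, PiLp.inner_apply]

lemma rowMatrix_mul_columnMatrix_apply_of_not (x : Fin n → EuclideanSpace ℝ (Fin k))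
    (v : {i // p i} → EuclideanSpace ℝ (Fin k)) (j : Fin n) {i : Fin n} (hi : ¬ p i) :
    (rowMatrix x * columnMatrix v) j i = 0 := by
  simp [columnMatrix, mul_apply, hi]

lemma rowMatrix_sum_smul (U : Matrix (Fin n) (Fin n) ℝ) (x : Fin n → EuclideanSpace ℝ (Fin k)) :
    rowMatrix (fun i => ∑ j, U i j • x j) = U * rowMatrix x := by
  ext i a
  simp [rowMatrix, mul_apply]

lemma trace_conjTranspose_mul_diagonal_mul {ι κ : Type*} [Fintype ι] [Fintype κ] [DecidableEq ι]
    (d : ι → ℝ) (R : Matrix ι κ ℝ) :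
    (Rᴴ * diagonal d * R).trace = ∑ j, d j * ∑ i, R j i ^ 2 := by
  simp only [trace, diag_apply, mul_apply (N := R), mul_diagonal, conjTranspose_apply,
    star_trivial, Finset.mul_sum]
  rw [Finset.sum_comm]
  exact Finset.sum_congr rfl fun j _ => Finset.sum_congr rfl fun i _ => by ring

lemma sum_sq_one_sub_rowMatrix_mul_columnMatrix {x : Fin n → EuclideanSpace ℝ (Fin k)}
    {v : {i // p i} → EuclideanSpace ℝ (Fin k)} (j : {j // p j})
    (hv : ∀ i : {i // p i}, inner ℝ (v i) (x j) = if i = j then 1 else 0) :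
    ∑ i, (1 - rowMatrix x * columnMatrix v : Matrix (Fin n) (Fin n) ℝ) j i ^ 2 = 0 := by
  refine Finset.sum_eq_zero fun i _ => ?_
  rw [sq_eq_zero_iff, Matrix.sub_apply, sub_eq_zero]
  by_cases hi : p i
  · rw [rowMatrix_mul_columnMatrix_apply x v j ⟨i, hi⟩, hv, one_apply]
    simp only [Subtype.ext_iff, eq_comm]
  · rw [rowMatrix_mul_columnMatrix_apply_of_not x v j hi, one_apply_ne]
    rintro rfl
    exact hi j.2

lemma sum_sq_one_sub_rowMatrix_mul_columnMatrix_of_not (x : Fin n → EuclideanSpace ℝ (Fin k))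
    (v : {i // p i} → EuclideanSpace ℝ (Fin k)) (j : {j // ¬ p j}) :
    ∑ i, (1 - rowMatrix x * columnMatrix v : Matrix (Fin n) (Fin n) ℝ) j i ^ 2
      = 1 + ∑ i, inner ℝ (v i) (x j) ^ 2 := by
  rw [← Fintype.sum_subtype_add_sum_subtype p, add_comm]
  congr 1
  · have hzero (i : {i // ¬ p i}) := rowMatrix_mul_columnMatrix_apply_of_not x v j i.2
    simp [hzero, one_apply, ← Subtype.ext_iff]
  · refine Finset.sum_congr rfl fun i _ => ?_
    have hji : (j : Fin n) ≠ i := fun h => j.2 (h ▸ i.2)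
    rw [Matrix.sub_apply, rowMatrix_mul_columnMatrix_apply, one_apply_ne hji, zero_sub, neg_sq]

lemma trace_diagonal_sub_nystrom_le {d : Fin n → ℝ} (hd : ∀ i, 0 ≤ d i)
    {x : Fin n → EuclideanSpace ℝ (Fin k)} {v : {i // p i} → EuclideanSpace ℝ (Fin k)}
    (hv : ∀ i j : {i // p i}, inner ℝ (v i) (x j) = if i = j then 1 else 0) :
    (diagonal d - nystrom (diagonal d) (rowMatrix x)).trace
      ≤ ∑ j : {j // ¬ p j}, d j * (1 + ∑ i, inner ℝ (v i) (x j) ^ 2) := by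
  refine ((isLeast_trace_sub_nystrom (.diagonal hd) (rowMatrix x)).2
    ⟨columnMatrix v, rfl⟩).trans_eq ?_
  beta_reduce
  rw [trace_conjTranspose_mul_diagonal_mul, ← Fintype.sum_subtype_add_sum_subtype p]
  simp only [sum_sq_one_sub_rowMatrix_mul_columnMatrix _ (hv · _),
    sum_sq_one_sub_rowMatrix_mul_columnMatrix_of_not, mul_zero, Finset.sum_const_zero, zero_add]

end RowInterpolation

section ExpectedError

variable {n k : ℕ}

instance : IsProbabilityMeasure (gaussianEnsemble n k) := by
  unfold gaussianEnsemble
  infer_instance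

lemma measurePreserving_ofLp_pi_stdGaussian :
    MeasurePreserving (fun (x : Fin n → EuclideanSpace ℝ (Fin k)) i => (x i).ofLp)
      (Measure.pi fun _ => stdGaussian _) (gaussianEnsemble n k) := by
  refine measurePreserving_pi _ _ fun _ => ⟨by fun_prop, ?_⟩
  rw [← map_pi_eq_stdGaussian, Measure.map_map (by fun_prop) (by fun_prop)]
  exact Measure.map_id

variable {A : Matrix (Fin n) (Fin n) ℝ}

lemma measurable_trace_sub_nystrom (hA : A.PosSemidef) :
    Measurable fun ω : Fin n → Fin k → ℝ => (A - nystrom A (Matrix.of ω)).trace := by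
  have hleast (ω : Fin n → Fin k → ℝ) := isLeast_trace_sub_nystrom hA (Matrix.of ω)
  simp only [← (hleast _).csInf_eq, sInf_range]
  exact (upperSemicontinuous_ciInf (fun ω => (hleast ω).bddBelow) fun X =>
    Continuous.upperSemicontinuous (by fun_prop)).measurable

lemma integrable_trace_sub_nystrom (hA : A.PosSemidef) :
    Integrable (fun ω => (A - nystrom A (Matrix.of ω)).trace) (gaussianEnsemble n k) := by
  refine .of_bound (measurable_trace_sub_nystrom hA).aestronglyMeasurable A.trace
    (ae_of_all _ fun ω => ?_)
  rw [Real.norm_of_nonneg (posSemidef_sub_nystrom hA _).trace_nonneg]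
  exact trace_sub_nystrom_le_trace hA _

variable {p : Fin n → Prop} [DecidablePred p]

lemma lintegral_trace_diagonal_sub_nystrom_le {d : Fin n → ℝ} (hd : ∀ i, 0 ≤ d i)
    (hp : Fintype.card {i // p i} + 1 < k) :
    ∫⁻ x, ENNReal.ofReal (diagonal d - nystrom (diagonal d) (rowMatrix x)).trace
        ∂Measure.pi (fun _ : Fin n => stdGaussian (EuclideanSpace ℝ (Fin k)))
      ≤ (1 + Fintype.card {i // p i} * ((k - Fintype.card {i // p i} - 1 : ℕ) : ℝ≥0∞)⁻¹)
        * ∑ j : {j // ¬ p j}, ENNReal.ofReal (d j) := by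
  set E := EuclideanSpace ℝ (Fin k)
  have hk : Module.finrank ℝ E = k := finrank_euclideanSpace_fin
  have hE : Fintype.card {i // p i} + 1 < Module.finrank ℝ E := by rwa [hk]
  have hsplit := (measurePreserving_piEquivPiSubtypeProd (fun _ : Fin n => stdGaussian E) p).symm
  rw [← hsplit.lintegral_comp_emb (MeasurableEquiv.measurableEmbedding _)]
  calc _ ≤ ∫⁻ x : {i // p i} → E, ∫⁻ y : {j // ¬ p j} → E, ENNReal.ofReal
          (∑ j : {j // ¬ p j}, d j * (1 + ∑ i, inner ℝ (dualVector x i) (y j) ^ 2))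
          ∂Measure.pi (fun _ => stdGaussian E) ∂Measure.pi (fun _ => stdGaussian E) := by
        refine (lintegral_prod_le _).trans (lintegral_mono_ae ?_)
        filter_upwards [ae_forall_orthComponent_ne_zero hE] with x hx
        refine lintegral_mono fun y => ENNReal.ofReal_le_ofReal ?_
        set z := (MeasurableEquiv.piEquivPiSubtypeProd (fun _ : Fin n => E) p).symm (x, y)
        have hz (i : {i // p i}) : z i = x i := dif_pos i.2
        have hz_not (j : {j // ¬ p j}) : z j = y j := dif_neg j.2
        refine (trace_diagonal_sub_nystrom_le hd (v := dualVector x) fun i j => ?_).trans_eq ?_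
        · rw [hz, inner_dualVector hx]
        · simp only [hz_not]
    _ = ∫⁻ x : {i // p i} → E, (1 + ∑ i, ‖dualVector x i‖ₑ ^ 2)
          * ∑ j : {j // ¬ p j}, ENNReal.ofReal (d j) ∂Measure.pi (fun _ => stdGaussian E) := by
        simp only [lintegral_sum_mul_one_add_inner_sq (fun j : {j // ¬ p j} => hd j)]
    _ = (1 + ∫⁻ x : {i // p i} → E, ∑ i, ‖dualVector x i‖ₑ ^ 2
          ∂Measure.pi (fun _ => stdGaussian E)) * ∑ j : {j // ¬ p j}, ENNReal.ofReal (d j) := by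
        rw [lintegral_mul_const' _ _ (ENNReal.sum_ne_top.2 fun _ _ => ENNReal.ofReal_ne_top),
          lintegral_add_left measurable_const, lintegral_const, measure_univ, mul_one]
    _ ≤ _ := by
        gcongr
        simpa only [hk] using lintegral_sum_enorm_dualVector_sq_le hE

lemma sum_subtype_not_lt_eq_sum_Ico {M : Type*} [AddCommMonoid M] (ϱ : ℕ) (f : ℕ → M) :
    ∑ j : {j : Fin n // ¬ (j : ℕ) < ϱ}, f j = ∑ i ∈ Finset.Ico ϱ n, f i := by
  rw [← Finset.sum_subtype (Finset.univ.filter fun i : Fin n => ¬ (i : ℕ) < ϱ) (by simp)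
      (fun i : Fin n => f i), Finset.sum_filter,
    Fin.sum_univ_eq_sum_range (fun i => if ¬ i < ϱ then f i else 0) n, ← Finset.sum_filter]
  congr 1
  ext i
  simp [and_comm]

lemma lintegral_trace_sub_nystrom_le (hA : A.PosSemidef) {ϱ : ℕ} (hϱ : ϱ + 1 < k) :
    ∫⁻ ω, ENNReal.ofReal (A - nystrom A (Matrix.of ω)).trace ∂gaussianEnsemble n k
      ≤ (1 + ϱ * ((k - ϱ - 1 : ℕ) : ℝ≥0∞)⁻¹)
        * ∑ i ∈ Finset.Ico ϱ n, ENNReal.ofReal (sval A i) := by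
  obtain ⟨U, hU, hAU⟩ := exists_unitary_eq_mul_diagonal_sval hA
  have hcard : Fintype.card {i : Fin n // (i : ℕ) < ϱ} ≤ ϱ := by
    rw [Fintype.card_subtype, Fin.card_filter_val_lt]
    exact min_le_right _ _
  have hrotate := measurePreserving_ofLp_pi_stdGaussian.comp
    (measurePreserving_sum_smul_pi_stdGaussian (E := EuclideanSpace ℝ (Fin k)) hU)
  set d : Fin n → ℝ := fun i => sval A i
  calc ∫⁻ ω, ENNReal.ofReal (A - nystrom A (Matrix.of ω)).trace ∂gaussianEnsemble n k
      ≤ ∫⁻ x, ENNReal.ofReal (A - nystrom A (U * rowMatrix x)).trace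
          ∂Measure.pi (fun _ : Fin n => stdGaussian (EuclideanSpace ℝ (Fin k))) := by
        simp only [← rowMatrix_sum_smul]
        rw [← hrotate.map_eq]
        exact lintegral_map_le _ _
    _ = ∫⁻ x, ENNReal.ofReal (diagonal d - nystrom (diagonal d) (rowMatrix x)).trace
          ∂Measure.pi (fun _ : Fin n => stdGaussian (EuclideanSpace ℝ (Fin k))) := by
        refine lintegral_congr fun x => ?_
        rw [← trace_conj_sub_nystrom (diagonal d) _ hU]
        exact hAU ▸ rfl
    _ ≤ _ := by
        refine (lintegral_trace_diagonal_sub_nystrom_le (p := fun i => (i : ℕ) < ϱ)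
          (fun i => sval_nonneg A i) (by lia)).trans ?_
        rw [sum_subtype_not_lt_eq_sum_Ico ϱ fun i => ENNReal.ofReal (sval A i)]
        gcongr

end ExpectedError

theorem stmt5_general {n k ϱ : ℕ} (A : Matrix (Fin n) (Fin n) ℝ) (hA : A.PosSemidef)
    (hϱ : ϱ + 1 < k) :
    (∫ ω, schatten 1 (A - nystrom A (Matrix.of ω)) ∂gaussianEnsemble n k)
      ≤ (1 + (ϱ : ℝ) / ((k : ℝ) - ϱ - 1)) * ∑ i ∈ Finset.Ico ϱ n, sval A i := by
  have hgap : ((k - ϱ - 1 : ℕ) : ℝ) = (k : ℝ) - ϱ - 1 := by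
    rw [Nat.cast_sub (by lia), Nat.cast_sub (by lia), Nat.cast_one]
  have hgap_pos : (0 : ℝ) < (k - ϱ - 1 : ℕ) := Nat.cast_pos.2 (by lia)
  have htrace (ω : Fin n → Fin k → ℝ) : schatten 1 (A - nystrom A (Matrix.of ω))
      = (A - nystrom A (Matrix.of ω)).trace :=
    schatten_one_eq_trace (posSemidef_sub_nystrom hA _)
  have htail : 0 ≤ ∑ i ∈ Finset.Ico ϱ n, sval A i := Finset.sum_nonneg fun i _ => sval_nonneg A i
  simp only [htrace, ← hgap]
  rw [← ENNReal.ofReal_le_ofReal_iff (by positivity), ofReal_integral_eq_lintegral_ofReal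
    (integrable_trace_sub_nystrom hA)
    (ae_of_all _ fun ω => (posSemidef_sub_nystrom hA _).trace_nonneg)]
  refine (lintegral_trace_sub_nystrom_le hA hϱ).trans_eq ?_
  rw [ENNReal.ofReal_mul (by positivity), ENNReal.ofReal_add zero_le_one (by positivity),
    ENNReal.ofReal_sum_of_nonneg fun i _ => sval_nonneg A i, div_eq_mul_inv,
    ENNReal.ofReal_mul (Nat.cast_nonneg _), ENNReal.ofReal_inv_of_pos hgap_pos]
  simp only [ENNReal.ofReal_one, ENNReal.ofReal_natCast]

theorem stmt5 {n k r : ℕ} (A : Matrix (Fin n) (Fin n) ℝ) (hA : A.PosSemidef)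
    (hr : 1 ≤ r) (hrk : r ≤ k) (hkn : k ≤ n) :
    ∀ ϱ : ℕ, ϱ + 1 < k →
      (∫ ω, schatten 1 (A - nystrom A (Matrix.of ω)) ∂ gaussianEnsemble n k)
        ≤ (1 + (ϱ : ℝ) / ((k : ℝ) - ϱ - 1)) * ∑ i ∈ Finset.Ico ϱ n, sval A i :=
  fun _ hϱ => stmt5_general A hA hϱ

end PsdSketch
end

section
/- Let A and B be n×n matrices over ℝ or ℂ, and assume rank(B) ≤ r. Then ‖A − B‖_∞ ≤ σ_{r+1}(A) + [‖A − B‖₁ − σ_{r+1}^{(1)}(A)], where σ_{r+1}(A) is the (r+1)-st largest singular value of A and σ_{r+1}^{(1)}(A) = Σ_{i > r} σ_i(A). -/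
open Matrix MeasureTheory ProbabilityTheory
open scoped ENNReal NNReal ComplexOrder Classical

namespace PsdSketch

variable {𝕜 : Type*} [RCLike 𝕜]

/-!
By Weyl's inequality `σᵢ₊ⱼ(S + T) ≤ σᵢ(S) + σⱼ(T)`, a perturbation of rank at most `r` satisfies
`σᵣ₊ᵢ(A) ≤ σᵢ(A - B)` (indices from `0`), so every gap `σᵢ(A - B) - σᵣ₊ᵢ(A)` is nonnegative. The
gaps add up to `‖A - B‖₁ - Σ_{i ≥ r} σᵢ(A)`, and the gap at `0` is at most that sum.
-/

open Module

theorem finrank_span_image_of_linearIndependent {ι R M : Type*} [Ring R] [StrongRankCondition R]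
    [AddCommGroup M] [Module R M] {v : ι → M} (hv : LinearIndependent R v) (s : Finset ι) :
    finrank R (Submodule.span R (v '' s)) = s.card := by
  have : Nontrivial R := nontrivial_of_invariantBasisNumber R
  rw [← Fintype.card_coe s, Set.image_eq_range]
  exact finrank_span_eq_card (hv.comp ((↑) : s → ι) Subtype.val_injective)

theorem sum_Ico_eq_sum_range_of_forall_eq_zero {M : Type*} [AddCommMonoid M] {f : ℕ → M} {n : ℕ}
    (hf : ∀ i, n ≤ i → f i = 0) (r : ℕ) :
    ∑ i ∈ Finset.Ico r n, f i = ∑ i ∈ Finset.range n, f (r + i) := by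
  rw [Finset.sum_Ico_eq_sum_range]
  refine Finset.sum_subset (Finset.range_mono (Nat.sub_le n r)) fun i _ hi => hf _ ?_
  exact Nat.sub_le_iff_le_add'.1 (by simpa using hi)

theorem inner_eq_zero_of_mem_span_image {ι E : Type*} [SeminormedAddCommGroup E]
    [InnerProductSpace 𝕜 E] {v : ι → E} (hv : Orthonormal 𝕜 v) {s : Set ι} {i : ι} (hi : i ∉ s)
    {x : E} (hx : x ∈ Submodule.span 𝕜 (v '' s)) : inner 𝕜 (v i) x = 0 := by
  obtain ⟨l, hl, rfl⟩ := (Finsupp.mem_span_image_iff_linearCombination 𝕜).1 hx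
  rw [hv.inner_right_finsupp, Finsupp.notMem_support_iff.1 fun h => hi (hl h)]

section SingularValues

variable {E F : Type*} [NormedAddCommGroup E] [InnerProductSpace 𝕜 E] [FiniteDimensional 𝕜 E]
  [NormedAddCommGroup F] [InnerProductSpace 𝕜 F] [FiniteDimensional 𝕜 F]

/-- An orthonormal basis of right singular vectors of `T`, the `i`-th one belonging to
`T.singularValues i`. -/
noncomputable def rightSingularBasis (T : E →ₗ[𝕜] F) :
    OrthonormalBasis (Fin (finrank 𝕜 E)) 𝕜 E :=
  T.isSymmetric_adjoint_comp_self.eigenvectorBasis rfl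

theorem adjoint_apply_apply_rightSingularBasis (T : E →ₗ[𝕜] F) (i : Fin (finrank 𝕜 E)) :
    T.adjoint (T (rightSingularBasis T i)) =
      ((T.singularValues i ^ 2 : ℝ) : 𝕜) • rightSingularBasis T i := by
  rw [T.sq_singularValues_fin rfl]
  exact T.isSymmetric_adjoint_comp_self.apply_eigenvectorBasis rfl i

theorem inner_rightSingularBasis_adjoint_apply (T : E →ₗ[𝕜] F) (i : Fin (finrank 𝕜 E)) (x : E) :
    inner 𝕜 (rightSingularBasis T i) (T.adjoint (T x)) =
      ((T.singularValues i ^ 2 : ℝ) : 𝕜) * inner 𝕜 (rightSingularBasis T i) x := by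
  rw [LinearMap.adjoint_inner_right, ← LinearMap.adjoint_inner_left,
    adjoint_apply_apply_rightSingularBasis, inner_smul_left, RCLike.conj_ofReal]

theorem norm_sq_apply_eq_sum_singularValues (T : E →ₗ[𝕜] F) (x : E) :
    ‖T x‖ ^ 2 = ∑ i : Fin (finrank 𝕜 E),
      T.singularValues i ^ 2 * ‖inner 𝕜 (rightSingularBasis T i) x‖ ^ 2 := by
  refine RCLike.ofReal_injective (K := 𝕜) ?_
  calc ((‖T x‖ ^ 2 : ℝ) : 𝕜)
    _ = inner 𝕜 x (T.adjoint (T x)) := by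
      rw [LinearMap.adjoint_inner_right, inner_self_eq_norm_sq_to_K, RCLike.ofReal_pow]
    _ = ∑ i, inner 𝕜 x (rightSingularBasis T i) *
          inner 𝕜 (rightSingularBasis T i) (T.adjoint (T x)) :=
      ((rightSingularBasis T).sum_inner_mul_inner _ _).symm
    _ = ∑ i : Fin (finrank 𝕜 E),
          ((T.singularValues i ^ 2 * ‖inner 𝕜 (rightSingularBasis T i) x‖ ^ 2 : ℝ) : 𝕜) := by
      refine Finset.sum_congr rfl fun i _ => ?_
      rw [inner_rightSingularBasis_adjoint_apply, mul_left_comm, ← inner_conj_symm x,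
        RCLike.conj_mul, RCLike.ofReal_mul, RCLike.ofReal_pow ‖_‖]
    _ = _ := (RCLike.ofReal_sum _ _).symm

theorem norm_apply_le_singularValues_mul_norm (T : E →ₗ[𝕜] F) {k : ℕ} {x : E}
    (hx : ∀ i : Fin (finrank 𝕜 E), (i : ℕ) < k → inner 𝕜 (rightSingularBasis T i) x = 0) :
    ‖T x‖ ≤ T.singularValues k * ‖x‖ := by
  refine le_of_sq_le_sq ?_ (mul_nonneg (T.singularValues_nonneg k) (norm_nonneg x))
  rw [mul_pow, norm_sq_apply_eq_sum_singularValues,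
    ← (rightSingularBasis T).sum_sq_norm_inner_right x, Finset.mul_sum]
  refine Finset.sum_le_sum fun i _ => ?_
  rcases lt_or_ge (i : ℕ) k with hi | hi
  · simp [hx i hi]
  · gcongr
    · exact T.singularValues_nonneg i
    · exact T.singularValues_antitone hi

theorem singularValues_mul_norm_le_norm_apply (T : E →ₗ[𝕜] F) {k : ℕ} {x : E}
    (hx : ∀ i : Fin (finrank 𝕜 E), k < (i : ℕ) → inner 𝕜 (rightSingularBasis T i) x = 0) :
    T.singularValues k * ‖x‖ ≤ ‖T x‖ := by
  refine le_of_sq_le_sq ?_ (norm_nonneg _)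
  rw [mul_pow, norm_sq_apply_eq_sum_singularValues,
    ← (rightSingularBasis T).sum_sq_norm_inner_right x, Finset.mul_sum]
  refine Finset.sum_le_sum fun i _ => ?_
  rcases lt_or_ge k (i : ℕ) with hi | hi
  · simp [hx i hi]
  · gcongr
    · exact T.singularValues_nonneg k
    · exact T.singularValues_antitone hi

theorem exists_submodule_norm_apply_le (T : E →ₗ[𝕜] F) (k : ℕ) :
    ∃ V : Submodule 𝕜 E, finrank 𝕜 E ≤ finrank 𝕜 V + k ∧
      ∀ x ∈ V, ‖T x‖ ≤ T.singularValues k * ‖x‖ := by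
  let s : Finset (Fin (finrank 𝕜 E)) := {i | (i : ℕ) < k}
  refine ⟨Submodule.span 𝕜 (rightSingularBasis T '' ↑sᶜ), ?_, fun x hx =>
    norm_apply_le_singularValues_mul_norm T fun i hi =>
      inner_eq_zero_of_mem_span_image (rightSingularBasis T).orthonormal
        (by simpa [s] using hi) hx⟩
  rw [finrank_span_image_of_linearIndependent (rightSingularBasis T).orthonormal.linearIndependent,
    Finset.card_compl, Fintype.card_fin, Fin.card_filter_val_lt]
  omega

theorem exists_submodule_le_norm_apply (T : E →ₗ[𝕜] F) {k : ℕ} (hk : k < finrank 𝕜 E) :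
    ∃ V : Submodule 𝕜 E, finrank 𝕜 V = k + 1 ∧
      ∀ x ∈ V, T.singularValues k * ‖x‖ ≤ ‖T x‖ := by
  let s : Finset (Fin (finrank 𝕜 E)) := Finset.Iic ⟨k, hk⟩
  refine ⟨Submodule.span 𝕜 (rightSingularBasis T '' s), ?_, fun x hx =>
    singularValues_mul_norm_le_norm_apply T fun i hi =>
      inner_eq_zero_of_mem_span_image (rightSingularBasis T).orthonormal
        (by simpa [s, Fin.le_def] using hi) hx⟩
  rw [finrank_span_image_of_linearIndependent (rightSingularBasis T).orthonormal.linearIndependent,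
    Fin.card_Iic]

theorem singularValues_le_of_forall_norm_apply_le (T : E →ₗ[𝕜] F) {k : ℕ} {c : ℝ} (hc : 0 ≤ c)
    {V : Submodule 𝕜 E} (hV : finrank 𝕜 E ≤ finrank 𝕜 V + k)
    (hT : ∀ x ∈ V, ‖T x‖ ≤ c * ‖x‖) : T.singularValues k ≤ c := by
  rcases le_or_gt (finrank 𝕜 E) k with hk | hk
  · rwa [T.singularValues_of_finrank_le hk]
  obtain ⟨W, hW, hTW⟩ := exists_submodule_le_norm_apply T hk
  have hVW : V ⊓ W ≠ ⊥ := fun h => by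
    have := Submodule.finrank_add_finrank_le_of_disjoint (disjoint_iff.2 h)
    omega
  obtain ⟨x, ⟨hxV, hxW⟩, hx⟩ := Submodule.exists_mem_ne_zero_of_ne_bot hVW
  exact le_of_mul_le_mul_right ((hTW x hxW).trans (hT x hxV)) (norm_pos_iff.2 hx)

theorem singularValues_add_apply_add_le (S T : E →ₗ[𝕜] F) (i j : ℕ) :
    (S + T).singularValues (i + j) ≤ S.singularValues i + T.singularValues j := by
  obtain ⟨V, hV, hSV⟩ := exists_submodule_norm_apply_le S i
  obtain ⟨W, hW, hTW⟩ := exists_submodule_norm_apply_le T j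
  have hVW : finrank 𝕜 E ≤ finrank 𝕜 ↥(V ⊓ W) + (i + j) := by
    have := Submodule.finrank_sup_add_finrank_inf_eq V W
    have := (V ⊔ W).finrank_le
    omega
  refine singularValues_le_of_forall_norm_apply_le (S + T)
    (add_nonneg (S.singularValues_nonneg i) (T.singularValues_nonneg j)) hVW fun x hx => ?_
  calc ‖(S + T) x‖ ≤ ‖S x‖ + ‖T x‖ := norm_add_le _ _
    _ ≤ S.singularValues i * ‖x‖ + T.singularValues j * ‖x‖ :=
      add_le_add (hSV x hx.1) (hTW x hx.2)
    _ = (S.singularValues i + T.singularValues j) * ‖x‖ := (add_mul _ _ _).symm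

theorem singularValues_add_le_of_finrank_range_le (S T : E →ₗ[𝕜] F) {r : ℕ}
    (hT : finrank 𝕜 T.range ≤ r) (i : ℕ) :
    S.singularValues (r + i) ≤ (S - T).singularValues i := by
  simpa [add_comm i, T.singularValues_eq_zero_iff_le_finrank_range.2 hT]
    using singularValues_add_apply_add_le (S - T) T i r

theorem stmt10_general (S T : E →ₗ[𝕜] F) {r : ℕ} (hT : finrank 𝕜 T.range ≤ r) (j : ℕ) :
    (S - T).singularValues j ≤ S.singularValues (r + j) +
      (∑ i ∈ Finset.range (finrank 𝕜 E), (S - T).singularValues i -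
        ∑ i ∈ Finset.Ico r (finrank 𝕜 E), S.singularValues i) := by
  have gap_nonneg (i : ℕ) : 0 ≤ (S - T).singularValues i - S.singularValues (r + i) :=
    sub_nonneg.2 (singularValues_add_le_of_finrank_range_le S T hT i)
  rw [sum_Ico_eq_sum_range_of_forall_eq_zero fun i => S.singularValues_of_finrank_le,
    ← Finset.sum_sub_distrib, ← sub_le_iff_le_add']
  rcases lt_or_ge j (finrank 𝕜 E) with hj | hj
  · exact Finset.single_le_sum (fun i _ => gap_nonneg i) (Finset.mem_range.2 hj)
  · rw [LinearMap.singularValues_of_finrank_le _ hj,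
      LinearMap.singularValues_of_finrank_le _ (hj.trans (Nat.le_add_left j r)), sub_zero]
    exact Finset.sum_nonneg fun i _ => gap_nonneg i

end SingularValues

section Matrix

variable {n : ℕ}

theorem toEuclideanLin_conjTranspose_mul_self {l m : Type*} [Fintype l] [Fintype m]
    [DecidableEq m] (M : Matrix l m 𝕜) :
    toEuclideanLin (Mᴴ * M) = (toEuclideanLin M).adjoint ∘ₗ toEuclideanLin M := by
  rw [← toEuclideanLin_conjTranspose_eq_adjoint]
  exact toLpLin_mul_same 2 Mᴴ M

theorem eigenvalues_sort_rev {M : Matrix (Fin n) (Fin n) 𝕜} (hM : M.IsHermitian) (i : Fin n) :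
    hM.eigenvalues (Tuple.sort hM.eigenvalues i.rev) =
      hM.eigenvalues₀ (i.cast (Fintype.card_fin n).symm) := by
  let σ : Equiv.Perm (Fin n) := (finCongr (Fintype.card_fin n).symm).trans
    (Fintype.equivOfCardEq (Fintype.card_fin _))
  have eigenvalues_comp_σ : hM.eigenvalues ∘ σ =
      hM.eigenvalues₀ ∘ Fin.cast (Fintype.card_fin n).symm := by
    ext j
    simp [σ, IsHermitian.eigenvalues]
  have antitone_sort_rev :
      Antitone (hM.eigenvalues ∘ Fin.revPerm.trans (Tuple.sort hM.eigenvalues)) :=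
    (Tuple.monotone_sort hM.eigenvalues).comp_antitone Fin.rev_anti
  have antitone_σ : Antitone (hM.eigenvalues ∘ σ) := by
    rw [eigenvalues_comp_σ]
    exact hM.eigenvalues₀_antitone.comp_monotone
      (Fin.castOrderIso (Fintype.card_fin n).symm).monotone
  exact congrFun ((Tuple.unique_antitone antitone_sort_rev antitone_σ).trans eigenvalues_comp_σ) i

theorem sval_eq_singularValues (M : Matrix (Fin n) (Fin n) 𝕜) (i : ℕ) :
    sval M i = (toEuclideanLin M).singularValues i := by
  by_cases hi : i < n
  · rw [sval, dif_pos hi, eigenvalues_sort_rev,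
      (toEuclideanLin M).singularValues_of_lt finrank_euclideanSpace (by simpa using hi)]
    simp only [IsHermitian.eigenvalues₀, toEuclideanLin_conjTranspose_mul_self]
    rfl
  · rw [sval, dif_neg hi, LinearMap.singularValues_of_finrank_le]
    simpa using hi

theorem schatten_top (M : Matrix (Fin n) (Fin n) 𝕜) : schatten ⊤ M = sval M 0 :=
  if_pos rfl

theorem schatten_one (M : Matrix (Fin n) (Fin n) 𝕜) :
    schatten 1 M = ∑ i ∈ Finset.range n, sval M i := by
  simp [schatten]

theorem finrank_range_toEuclideanLin {l m : Type*} [Finite l] [Fintype m] [DecidableEq m]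
    (M : Matrix l m 𝕜) : finrank 𝕜 (toEuclideanLin M).range = M.rank := by
  have : Fintype l := Fintype.ofFinite l
  rw [rank_eq_finrank_range_toLin M (PiLp.basisFun 2 𝕜 l) (PiLp.basisFun 2 𝕜 m),
    ← toLpLin_eq_toLin]

end Matrix

theorem stmt10 {𝕜 : Type*} [RCLike 𝕜] {n : ℕ} (A B : Matrix (Fin n) (Fin n) 𝕜)
    (r : ℕ) (hB : B.rank ≤ r) :
    schatten ⊤ (A - B)
      ≤ sval A r + (schatten 1 (A - B) - ∑ i ∈ Finset.Ico r n, sval A i) := by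
  simpa [schatten_top, schatten_one, sval_eq_singularValues] using
    stmt10_general (toEuclideanLin A) (toEuclideanLin B)
      ((finrank_range_toEuclideanLin B).trans_le hB) 0

end PsdSketch
end
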